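/- arXiv:2411.14689 — 2 statements merged into one kernel-verified Lean document; each statement's English description precedes it below -/
import Mathlib

section
/- Let q be a free idempotent ultrafilter on ℕ, let γ > 0 be irrational, and let f : ℝ → ℝ be γ-periodic (f(x + γ) = f(x) for all x). Let x ∈ ℝ and suppose the difference quotient h ↦ (f(x + h) − f(x))/h tends to +∞ as h → 0 with h ≠ 0. Then for every real M, the set {n : ℕ | (f(x + n) − f(x))/rm_γ(n) > M} belongs to q. (I.e., the hyperreal Δf(x)/[rm_γ] is positive infinite.) -/
noncomputable def rm (γ : ℝ) (n : ℕ) : ℝ := (n : ℝ) - γ * (round ((n : ℝ) / γ) : ℝ)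

/-!
Along an idempotent ultrafilter `q`, a homomorphism into a compact Hausdorff group converges to an
idempotent of that group, hence to `0`. Applied to `n ↦ n mod γ` in the circle `ℝ / γℤ`, whose norm
is the distance to the nearest multiple of `γ`, this gives `rm γ n → 0` along `q`. By periodicity
`f (x + n) = f (x + rm γ n)`, so the quotients in question are difference quotients of `f` at `x`
with increments tending to `0`.
-/

open Filter Topology

-- `∀ᶠ k in U + V, p k` means `∀ᶠ m in U, ∀ᶠ n in V, p (m + n)`.
attribute [local instance] Ultrafilter.add

theorem ultrafilter_add_self_eq_self_iff {M : Type*} [AddCommMagma M] {q : Ultrafilter M} :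
    q + q = q ↔ ∀ S : Set M, S ∈ q ↔ {n | {m | m + n ∈ S} ∈ q} ∈ q := by
  have mem_add (S : Set M) : S ∈ q + q ↔ {n | {m | m + n ∈ S} ∈ q} ∈ q := by
    simp only [add_comm _ (_ : M)]
    exact Ultrafilter.eventually_add q q (· ∈ S)
  simp only [← mem_add, Ultrafilter.ext_iff, iff_comm]

theorem tendsto_ultrafilter_add {F M G : Type*} [Add M] [Add G] [TopologicalSpace G]
    [ContinuousAdd G] [FunLike F M G] [AddHomClass F M G] {φ : F} {U V : Ultrafilter M} {a b : G}
    (hU : Tendsto φ U (𝓝 a)) (hV : Tendsto φ V (𝓝 b)) :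
    Tendsto φ (U + V : Ultrafilter M) (𝓝 (a + b)) := by
  intro W hW
  have hprod : ∀ᶠ p in (U : Filter M) ×ˢ (V : Filter M), φ p.1 + φ p.2 ∈ W :=
    (hU.comp tendsto_fst).add (hV.comp tendsto_snd) hW
  have hiter : ∀ᶠ m in U, ∀ᶠ n in V, φ (m + n) ∈ W := by
    simpa only [map_add] using hprod.curry
  exact (Ultrafilter.eventually_add U V (φ · ∈ W)).2 hiter

theorem tendsto_nhds_zero_of_ultrafilter_add_self {F M G : Type*} [Add M] [AddGroup G]
    [TopologicalSpace G] [ContinuousAdd G] [CompactSpace G] [T2Space G] [FunLike F M G]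
    [AddHomClass F M G] (φ : F) {q : Ultrafilter M} (hq : q + q = q) : Tendsto φ q (𝓝 0) := by
  obtain ⟨a, ha⟩ : ∃ a, Tendsto φ q (𝓝 a) := ⟨_, (q.map φ).le_nhds_lim⟩
  have haa : Tendsto φ q (𝓝 (a + a)) := by
    simpa only [hq] using tendsto_ultrafilter_add ha ha
  have ha_zero : a = 0 := add_eq_left.1 (tendsto_nhds_unique haa ha)
  exact ha_zero ▸ ha

theorem norm_coe_addCircle_abs (p x : ℝ) : ‖(x : AddCircle |p|)‖ = ‖(x : AddCircle p)‖ := by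
  rcases abs_choice p with h | h <;> rw [h]
  exact AddCircle.norm_neg_period p x

theorem norm_natCast_addCircle_eq_abs_rm (γ : ℝ) (n : ℕ) :
    ‖((n : ℝ) : AddCircle γ)‖ = |rm γ n| := by
  rw [AddCircle.norm_eq, rm, mul_comm γ, div_eq_inv_mul]

theorem rm_ne_zero {γ : ℝ} (hγ : Irrational γ) {n : ℕ} (hn : n ≠ 0) : rm γ n ≠ 0 := by
  intro h
  have hmul : γ * round ((n : ℝ) / γ) = n := (sub_eq_zero.1 h).symm
  have hround : round ((n : ℝ) / γ) ≠ 0 := by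
    intro h0
    rw [h0, Int.cast_zero, mul_zero] at hmul
    exact hn (Nat.cast_eq_zero.1 hmul.symm)
  exact (hγ.mul_intCast hround).ne_nat n hmul

theorem map_add_rm_of_periodic {α : Type*} {f : ℝ → α} {γ : ℝ}
    (hf : Function.Periodic f γ) (x : ℝ) (n : ℕ) : f (x + rm γ n) = f (x + n) := by
  rw [rm, ← add_sub_assoc, mul_comm γ, hf.sub_int_mul_eq]

theorem tendsto_rm_nhds_zero {q : Ultrafilter ℕ} (hq : q + q = q) {γ : ℝ} (hγ : γ ≠ 0) :
    Tendsto (rm γ) q (𝓝 0) := by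
  have : Fact (0 < |γ|) := ⟨abs_pos.2 hγ⟩
  let toCircle : ℕ →+ AddCircle |γ| :=
    (QuotientAddGroup.mk' _).comp (Nat.castAddMonoidHom ℝ)
  have norm_toCircle (n : ℕ) : ‖toCircle n‖ = |rm γ n| :=
    (norm_coe_addCircle_abs γ n).trans (norm_natCast_addCircle_eq_abs_rm γ n)
  have hnorm : Tendsto (fun n ↦ ‖toCircle n‖) q (𝓝 0) :=
    tendsto_zero_iff_norm_tendsto_zero.1 (tendsto_nhds_zero_of_ultrafilter_add_self toCircle hq)
  exact (tendsto_zero_iff_abs_tendsto_zero _).2 (hnorm.congr norm_toCircle)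

theorem tendsto_rm_nhdsNE_zero {q : Ultrafilter ℕ} (hq : q + q = q) (hq₀ : {0} ∉ q)
    {γ : ℝ} (hγ : Irrational γ) : Tendsto (rm γ) q (𝓝[≠] 0) := by
  have hne : ∀ᶠ n in q, n ≠ 0 := Ultrafilter.compl_mem_iff_notMem.2 hq₀
  exact tendsto_nhdsWithin_iff.2
    ⟨tendsto_rm_nhds_zero hq hγ.ne_zero, hne.mono fun _ hn ↦ rm_ne_zero hγ hn⟩

theorem stmt_11_general {E : Type*} [AddCommGroup E] [Module ℝ E] {q : Ultrafilter ℕ}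
    (hq : q + q = q) (hq₀ : {0} ∉ q) {γ : ℝ} (hγ : Irrational γ) {f : ℝ → E}
    (hf : Function.Periodic f γ) {x : ℝ} {l : Filter E}
    (hl : Tendsto (fun h ↦ h⁻¹ • (f (x + h) - f x)) (𝓝[≠] 0) l) :
    Tendsto (fun n : ℕ ↦ (rm γ n)⁻¹ • (f (x + n) - f x)) q l := by
  simpa only [Function.comp_def, map_add_rm_of_periodic hf] using
    hl.comp (tendsto_rm_nhdsNE_zero hq hq₀ hγ)

theorem stmt_11 (q : Ultrafilter ℕ)
    (hfree : ∀ S : Set ℕ, S.Finite → S ∉ q)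
    (hidem : ∀ S : Set ℕ, S ∈ q ↔ {n : ℕ | {m : ℕ | m + n ∈ S} ∈ q} ∈ q)
    (γ : ℝ) (hγpos : 0 < γ) (hγirr : Irrational γ)
    (f : ℝ → ℝ) (hper : ∀ x : ℝ, f (x + γ) = f x)
    (x : ℝ)
    (hdiv : Filter.Tendsto (fun h : ℝ => (f (x + h) - f x) / h)
      (nhdsWithin 0 {0}ᶜ) Filter.atTop) :
    ∀ M : ℝ, {n : ℕ | (f (x + n) - f x) / rm γ n > M} ∈ q := by
  simp only [div_eq_inv_mul] at hdiv ⊢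
  exact (stmt_11_general (ultrafilter_add_self_eq_self_iff.2 hidem)
    (hfree _ (Set.finite_singleton 0)) hγirr hper hdiv).eventually_gt_atTop
end

section
/- Let q be a free idempotent ultrafilter on ℕ. There exists f : ℕ → ℝ such that {n : ℕ | {m : ℕ | f(n + m) = f(n)} ∈ q} ∈ q, but for every r ∈ ℝ, {n : ℕ | f n = r} ∉ q. (I.e., there is f with finite derivative Δ[f] = 0 that is not q-almost-everywhere constant.) -/
/-!
An idempotent ultrafilter `q` on `ℕ` maps to an idempotent of each finite group `ZMod N`, that is,
to `0`, so `q`-almost every number is divisible by `N`. Hence adding a `q`-typical `m` to a fixed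
`n ≠ 0` does not change the 2-adic valuation, whereas the 2-adic valuation itself tends to infinity
along `q`.
-/

open Filter

attribute [local instance] Ultrafilter.add

section IdempotentUltrafilter

theorem ultrafilter_add_self_eq_iff {M : Type*} [Add M] {q : Ultrafilter M} :
    q + q = q ↔ ∀ S : Set M, S ∈ q ↔ {n | {m | n + m ∈ S} ∈ q} ∈ q :=
  Ultrafilter.ext_iff.trans <| forall_congr' fun _ => Iff.comm

theorem eventually_map_eq_zero_of_add_self_eq {M G F : Type*} [Add M] [AddMonoid G]
    [IsLeftCancelAdd G] [Finite G] [FunLike F M G] [AddHomClass F M G] {q : Ultrafilter M}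
    (hq : q + q = q) (φ : F) : ∀ᶠ n in q, φ n = 0 := by
  obtain ⟨a, ha⟩ := (q.map φ).eq_pure_of_finite
  have h_const : ∀ᶠ n in q, φ n = a := by
    have : ∀ᶠ g in q.map φ, g = a := by simp [ha]
    exact this
  have h_add : ∀ᶠ n in q, ∀ᶠ m in q, φ (n + m) = a :=
    (Ultrafilter.eventually_add q q (φ · = a)).1 (by rwa [hq])
  obtain ⟨n, hn, h_add_n⟩ := (h_const.and h_add).exists
  obtain ⟨m, hm, hnm⟩ := (h_const.and h_add_n).exists
  have h_idem : a + a = a := by rwa [map_add, hn, hm] at hnm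
  simpa only [add_eq_left.1 h_idem] using h_const

theorem eventually_dvd_of_add_self_eq {q : Ultrafilter ℕ} (hq : q + q = q) {N : ℕ} (hN : N ≠ 0) :
    ∀ᶠ n in q, N ∣ n := by
  have : NeZero N := ⟨hN⟩
  simpa only [Nat.coe_castAddMonoidHom, ZMod.natCast_eq_zero_iff] using
    eventually_map_eq_zero_of_add_self_eq hq (Nat.castAddMonoidHom (ZMod N))

end IdempotentUltrafilter

section PadicValNat

variable {p : ℕ} {l : Filter ℕ}

theorem padicValNat_add_of_pow_dvd (hp : p ≠ 1) {n m : ℕ} (hn : n ≠ 0)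
    (hm : p ^ (padicValNat p n + 1) ∣ m) : padicValNat p (n + m) = padicValNat p n := by
  have h_dvd_iff {k : ℕ} (hk : k ≤ padicValNat p n + 1) :
      k ≤ padicValNat p (n + m) ↔ k ≤ padicValNat p n := by
    rw [← padicValNat_dvd_iff_le_of_ne_one hp (by omega : n + m ≠ 0),
      ← padicValNat_dvd_iff_le_of_ne_one hp hn, Nat.dvd_add_left ((pow_dvd_pow p hk).trans hm)]
  have h_le := (h_dvd_iff (Nat.le_succ _)).2 le_rfl
  have h_lt := mt (h_dvd_iff le_rfl).1 (Nat.not_succ_le_self _)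
  omega

theorem eventually_eventually_padicValNat_add_eq (hp : p ≠ 1) (hne : ∀ᶠ n in l, n ≠ 0)
    (hdvd : ∀ k, ∀ᶠ n in l, p ^ k ∣ n) :
    ∀ᶠ n in l, ∀ᶠ m in l, padicValNat p (n + m) = padicValNat p n :=
  hne.mono fun n hn => (hdvd (padicValNat p n + 1)).mono fun _ => padicValNat_add_of_pow_dvd hp hn

theorem tendsto_padicValNat_atTop (hp : p ≠ 1) (hne : ∀ᶠ n in l, n ≠ 0)
    (hdvd : ∀ k, ∀ᶠ n in l, p ^ k ∣ n) : Tendsto (padicValNat p) l atTop :=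
  tendsto_atTop.2 fun k => (hne.and (hdvd k)).mono fun _ hn =>
    (padicValNat_dvd_iff_le_of_ne_one hp hn.1).1 hn.2

end PadicValNat

theorem stmt_14 (q : Ultrafilter ℕ)
    (hfree : ∀ S : Set ℕ, S.Finite → S ∉ q)
    (hidem : ∀ S : Set ℕ, S ∈ q ↔ {n : ℕ | {m : ℕ | m + n ∈ S} ∈ q} ∈ q) :
    ∃ f : ℕ → ℝ,
      {n : ℕ | {m : ℕ | f (n + m) = f n} ∈ q} ∈ q ∧
      ∀ r : ℝ, {n : ℕ | f n = r} ∉ q := by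
  have hq : q + q = q :=
    ultrafilter_add_self_eq_iff.2 fun S => by simpa only [add_comm] using hidem S
  have hne : ∀ᶠ n in q, n ≠ 0 :=
    Ultrafilter.compl_mem_iff_notMem.2 (hfree {0} (Set.finite_singleton 0))
  have hdvd (k : ℕ) : ∀ᶠ n in q, 2 ^ k ∣ n :=
    eventually_dvd_of_add_self_eq hq (pow_ne_zero k two_ne_zero)
  refine ⟨fun n => padicValNat 2 n, ?_, fun r => ?_⟩
  · have h_add := eventually_eventually_padicValNat_add_eq Nat.prime_two.ne_one hne hdvd
    filter_upwards [h_add] with n hn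
    filter_upwards [hn] with m hnm using congrArg Nat.cast hnm
  · have h_atTop : Tendsto (fun n => (padicValNat 2 n : ℝ)) q atTop :=
      tendsto_natCast_atTop_atTop.comp (tendsto_padicValNat_atTop Nat.prime_two.ne_one hne hdvd)
    exact Ultrafilter.compl_mem_iff_notMem.1 (h_atTop.eventually_ne_atTop r)
end
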